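/- arXiv:2604.11558 — 8 statements merged into one kernel-verified Lean document; each statement's English description precedes it below -/
import Mathlib

section
/- Fix an integer n ≥ 2 and h > 0, and let A be the n×n real tridiagonal matrix with diagonal entries a_ℓ = −2/h² for ℓ = 1,…,n, superdiagonal entries b_ℓ = 2ℓ/((2ℓ−1)h²) for ℓ = 1,…,n−1, and subdiagonal entries c_ℓ = 2ℓ/((2ℓ+1)h²) for ℓ = 1,…,n−2 together with c_{n−1} = 2/h². Then all off-diagonal entries b_ℓ, c_ℓ are positive, and every complex eigenvalue of A is real and lies in the interval [−4/h², 0]; in particular all eigenvalues of A are nonpositive. -/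
/-!
The matrix is similar to a symmetric one through a positive diagonal scaling: with the weights
`w ℓ = 2ℓ - 1` for `ℓ < n` (proportional to the grid points) and `w n = n - 1` one has
`w ℓ * b ℓ = w (ℓ + 1) * c ℓ = 2ℓ / h²`. Hence, for an eigenvector `v` of `μ`, the number
`∑ i, w i * conj (v i) * (A v) i = μ * ∑ i, w i * |v i|²` is its own conjugate, so `μ` is real
(`eigenvalue_im_eq_zero_of_weights`).
In every row the off-diagonal entries are nonnegative with sum `2 / h²`, so
Gershgorin's theorem puts every eigenvalue in the closed disc of radius `2 / h²` around `-2 / h²`,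
whose real parts range over `[-4 / h², 0]`.
-/

/-- The `n × n` real tridiagonal matrix with (1-based) diagonal entries `a 1, …, a n`,
superdiagonal entries `b 1, …, b (n-1)` and subdiagonal entries `c 1, …, c (n-1)`. -/
noncomputable def tridiag (n : ℕ) (c a b : ℕ → ℝ) : Matrix (Fin n) (Fin n) ℝ :=
  Matrix.of fun i j : Fin n =>
    if (i : ℕ) = (j : ℕ) then a ((i : ℕ) + 1)
    else if (i : ℕ) + 1 = (j : ℕ) then b ((i : ℕ) + 1)
    else if (j : ℕ) + 1 = (i : ℕ) then c ((j : ℕ) + 1)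
    else 0

/-- A real matrix which is symmetric for a positively weighted inner product has only real
eigenvalues. -/
theorem eigenvalue_im_eq_zero_of_weights {ι : Type*} [Fintype ι]
    (B : Matrix ι ι ℝ) (w : ι → ℝ) (hw : ∀ i, 0 < w i)
    (hsymm : ∀ i j, w i * B i j = w j * B j i) (μ : ℂ) (v : ι → ℂ) (hv : v ≠ 0)
    (hμ : ∀ i, ∑ j, (B i j : ℂ) * v j = μ * v i) : μ.im = 0 := by
  have hD : 0 < ∑ i, w i * Complex.normSq (v i) := by
    obtain ⟨k, hk⟩ := Function.ne_iff.mp hv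
    refine Finset.sum_pos' (fun i _ => mul_nonneg (hw i).le (Complex.normSq_nonneg _))
      ⟨k, Finset.mem_univ k, mul_pos (hw k) (Complex.normSq_pos.mpr hk)⟩
  have hS : ∑ i, ∑ j, ((w i * B i j : ℝ) : ℂ) * (starRingEnd ℂ (v i) * v j)
      = μ * ((∑ i, w i * Complex.normSq (v i) : ℝ) : ℂ) := by
    push_cast
    rw [Finset.mul_sum]
    refine Finset.sum_congr rfl fun i _ => ?_
    rw [Complex.normSq_eq_conj_mul_self]
    calc _ = (w i : ℂ) * starRingEnd ℂ (v i) * ∑ j, (B i j : ℂ) * v j := by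
          rw [Finset.mul_sum]
          exact Finset.sum_congr rfl fun j _ => by ring
      _ = _ := by rw [hμ i]; ring
  have hconj : starRingEnd ℂ (∑ i, ∑ j, ((w i * B i j : ℝ) : ℂ) * (starRingEnd ℂ (v i) * v j))
      = ∑ i, ∑ j, ((w i * B i j : ℝ) : ℂ) * (starRingEnd ℂ (v i) * v j) := by
    simp only [map_sum, map_mul, Complex.conj_conj, Complex.conj_ofReal]
    rw [Finset.sum_comm]
    refine Finset.sum_congr rfl fun i _ => Finset.sum_congr rfl fun j _ => ?_
    rw [hsymm j i]
    ring
  rw [hS, Complex.conj_eq_iff_im, Complex.im_mul_ofReal] at hconj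
  exact (mul_eq_zero.mp hconj).resolve_right hD.ne'

theorem sum_fin_ite_val_eq (n m : ℕ) (x : ℝ) :
    ∑ j : Fin n, (if (j : ℕ) = m then x else 0) = if m < n then x else 0 := by
  rw [Fin.sum_univ_eq_sum_range (fun j => if j = m then x else 0) n, Finset.sum_ite_eq']
  simp

/-- A bound for the absolute off-diagonal row sum of a tridiagonal matrix, with the nonexistent neighbours
of the first and last rows contributing zero. -/
theorem sum_erase_norm_tridiag_le (n : ℕ) (c a b : ℕ → ℝ) (i : Fin n) :
    ∑ j ∈ Finset.univ.erase i, ‖tridiag n c a b i j‖ ≤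
      (if (i : ℕ) + 1 < n then |b (i + 1)| else 0) + (if (i : ℕ) = 0 then 0 else |c i|) := by
  have h2 : ∑ j : Fin n, (if (j : ℕ) + 1 = i then |c i| else 0)
      = if (i : ℕ) = 0 then 0 else |c i| := by
    rcases Nat.eq_zero_or_pos (i : ℕ) with h0 | h0
    · simp [h0]
    · have := sum_fin_ite_val_eq n (i - 1) |c i|
      rw [if_pos (by omega)] at this
      rw [if_neg (by omega), ← this]
      refine Finset.sum_congr rfl fun j _ => ?_
      congr 1
      apply propext
      omega
  rw [← h2, ← sum_fin_ite_val_eq n (i + 1) |b (i + 1)|, ← Finset.sum_add_distrib]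
  calc _ ≤ ∑ j ∈ Finset.univ.erase i, ((if (j : ℕ) = i + 1 then |b (i + 1)| else 0)
          + (if (j : ℕ) + 1 = i then |c i| else 0)) := by
        refine Finset.sum_le_sum fun j hj => ?_
        have hne : (i : ℕ) ≠ j := fun e => (Finset.ne_of_mem_erase hj) (Fin.ext e.symm)
        simp only [tridiag, Matrix.of_apply, Real.norm_eq_abs, if_neg hne]
        by_cases h3 : (i : ℕ) + 1 = j
        · rw [if_pos h3, if_pos h3.symm, if_neg (by omega)]; simp
        · rw [if_neg h3, if_neg (Ne.symm h3)]
          by_cases h4 : (j : ℕ) + 1 = i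
          · rw [if_pos h4, if_pos h4, h4]; simp
          · rw [if_neg h4, if_neg h4]; simp
    _ ≤ _ := by
        refine Finset.sum_le_sum_of_subset_of_nonneg (Finset.erase_subset _ _) fun j _ _ => ?_
        positivity

/-- The matrix `A_{ρ,2}` (diagonal `−2/h²`, superdiagonal `b_ℓ = 2ℓ/((2ℓ−1)h²)`,
subdiagonal `c_ℓ = 2ℓ/((2ℓ+1)h²)` for `ℓ ≤ n−2` and `c_{n−1} = 2/h²`) has positive
off-diagonal entries, and all of its complex eigenvalues are real and lie in
`[−4/h², 0]`; in particular they are nonpositive. -/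
theorem A_rho2_spectrum
    (n : ℕ) (hn : 2 ≤ n) (h : ℝ) (hh : 0 < h) :
    let a : ℕ → ℝ := fun _ => -2 / h ^ 2
    let b : ℕ → ℝ := fun ℓ => 2 * (ℓ : ℝ) / ((2 * (ℓ : ℝ) - 1) * h ^ 2)
    let c : ℕ → ℝ := fun ℓ =>
      if ℓ = n - 1 then 2 / h ^ 2 else 2 * (ℓ : ℝ) / ((2 * (ℓ : ℝ) + 1) * h ^ 2)
    (∀ ℓ, 1 ≤ ℓ → ℓ ≤ n - 1 → 0 < b ℓ ∧ 0 < c ℓ) ∧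
    ∀ μ ∈ spectrum ℂ ((tridiag n c a b).map (algebraMap ℝ ℂ)),
      μ.im = 0 ∧ -4 / h ^ 2 ≤ μ.re ∧ μ.re ≤ 0 := by
  intro a b c
  have hh2 : 0 < h ^ 2 := by positivity
  have hpos : ∀ ℓ, 1 ≤ ℓ → ℓ ≤ n - 1 → 0 < b ℓ ∧ 0 < c ℓ := by
    intro ℓ h1 _
    have h1' : (1 : ℝ) ≤ ℓ := by exact_mod_cast h1
    have h3 : 0 < 2 * (ℓ : ℝ) - 1 := by linarith
    refine ⟨by simp only [b]; positivity, ?_⟩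
    simp only [c]
    split_ifs <;> positivity
  refine ⟨hpos, fun μ hμ => ?_⟩
  have hev : Module.End.HasEigenvalue
      (Matrix.toLin' ((tridiag n c a b).map (algebraMap ℝ ℂ))) μ := by
    rw [Module.End.hasEigenvalue_iff_mem_spectrum, Matrix.spectrum_toLin']
    exact hμ
  constructor
  · obtain ⟨v, hv⟩ := hev.exists_hasEigenvector
    -- The weight of the 0-based index `i` is that of the 1-based index `ℓ = i + 1`.
    refine eigenvalue_im_eq_zero_of_weights (tridiag n c a b)
      (fun i => if (i : ℕ) + 1 = n then (n : ℝ) - 1 else 2 * (i : ℝ) + 1) ?_ ?_ μ v hv.2 ?_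
    · intro i
      have : (2 : ℝ) ≤ n := by exact_mod_cast hn
      split_ifs
      · linarith
      · positivity
    · -- The flux identity `w ℓ * b ℓ = w (ℓ + 1) * c ℓ` in 0-based indices.
      have key : ∀ i j : Fin n, (i : ℕ) + 1 = j →
          (if (i : ℕ) + 1 = n then (n : ℝ) - 1 else 2 * ((i : ℕ) : ℝ) + 1) * b (i + 1)
          = (if (j : ℕ) + 1 = n then (n : ℝ) - 1 else 2 * ((j : ℕ) : ℝ) + 1) * c (i + 1) := by
        intro i j hij
        have hj := j.isLt
        have hp : (2 * ((i : ℕ) : ℝ) + 1) ≠ 0 := by positivity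
        have hp3 : (2 * ((i : ℕ) : ℝ) + 3) ≠ 0 := by positivity
        have e1 : (2 * (((i : ℕ) : ℝ) + 1) - 1) = 2 * ((i : ℕ) : ℝ) + 1 := by ring
        have e2 : (2 * (((i : ℕ) : ℝ) + 1) + 1) = 2 * ((i : ℕ) : ℝ) + 3 := by ring
        have hjc : ((j : ℕ) : ℝ) = (i : ℕ) + 1 := by rw [← hij]; push_cast; ring
        rw [if_neg (by omega)]
        simp only [b, c]
        by_cases hl : (j : ℕ) + 1 = n
        · have hnc : (n : ℝ) = (i : ℕ) + 2 := by
            exact_mod_cast (show n = (i : ℕ) + 2 by omega)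
          rw [if_pos hl, if_pos (by omega), hnc]
          push_cast
          rw [e1]
          field_simp
          ring
        · rw [if_neg hl, if_neg (by omega), hjc]
          push_cast
          rw [e1, e2]
          field_simp
      intro i j
      simp only [tridiag, Matrix.of_apply]
      rcases eq_or_ne (i : ℕ) j with e | e
      · rw [Fin.ext e]
      rw [if_neg e, if_neg e.symm]
      by_cases h1 : (i : ℕ) + 1 = j
      · rw [if_pos h1, if_neg (show ¬(j : ℕ) + 1 = i by omega), if_pos h1]
        exact key i j h1
      by_cases h2 : (j : ℕ) + 1 = i
      · rw [if_neg h1, if_pos h2, if_pos h2]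
        exact (key j i h2).symm
      · rw [if_neg h1, if_neg h2, if_neg h2, if_neg h1]
        simp
    · intro i
      have := congrFun hv.apply_eq_smul i
      simpa [Matrix.toLin'_apply, Matrix.mulVec, dotProduct] using this
  · obtain ⟨k, hk⟩ := eigenvalue_mem_ball hev
    have hrow : ∑ j ∈ Finset.univ.erase k, ‖tridiag n c a b k j‖ ≤ 2 / h ^ 2 := by
      refine (sum_erase_norm_tridiag_le n c a b k).trans ?_
      have hkn := k.isLt
      have hb : (k : ℕ) + 1 < n → |b (k + 1)| = b (k + 1) := fun hlt =>
        abs_of_pos (hpos _ (by omega) (by omega)).1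
      have hc : (k : ℕ) ≠ 0 → |c k| = c k := fun h0 =>
        abs_of_pos (hpos _ (by omega) (by omega)).2
      have hp : (2 * ((k : ℕ) : ℝ) + 1) ≠ 0 := by positivity
      have e1 : (2 * (((k : ℕ) : ℝ) + 1) - 1) = 2 * ((k : ℕ) : ℝ) + 1 := by ring
      by_cases h0 : (k : ℕ) = 0
      · rw [if_pos h0, if_pos (by omega), hb (by omega)]
        simp only [b, h0]
        norm_num
      · rw [if_neg h0, hc h0]
        by_cases hl : (k : ℕ) + 1 < n
        · rw [if_pos hl, hb hl]
          simp only [b, c]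
          rw [if_neg (by omega)]
          push_cast
          rw [e1]
          apply le_of_eq
          field_simp
          ring
        · rw [if_neg hl]
          simp only [c]
          rw [if_pos (by omega), zero_add]
    have hdiag : tridiag n c a b k k = -2 / h ^ 2 := by simp [tridiag, a]
    have hnorm : ‖μ - ((-2 / h ^ 2 : ℝ) : ℂ)‖ ≤ 2 / h ^ 2 := by
      rw [mem_closedBall_iff_norm] at hk
      simp only [Matrix.map_apply, norm_algebraMap', hdiag] at hk
      exact hk.trans hrow
    have hre := abs_le.mp ((Complex.abs_re_le_norm _).trans hnorm)
    rw [Complex.sub_re, Complex.ofReal_re] at hre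
    have e4 : -4 / h ^ 2 = -2 / h ^ 2 - 2 / h ^ 2 := by ring
    have e0 : -2 / h ^ 2 + 2 / h ^ 2 = 0 := by ring
    exact ⟨by linarith [hre.1], by linarith [hre.2]⟩
end

section
/- Fix an integer n ≥ 2 and h > 0, and let A be the n×n real tridiagonal matrix with diagonal entries a_ℓ = −2/h² for ℓ = 1,…,n, superdiagonal entries b_ℓ = (ℓ+1)/(ℓh²) for ℓ = 1,…,n−1, and subdiagonal entries c_ℓ = ℓ/((ℓ+1)h²) for ℓ = 1,…,n−2 together with c_{n−1} = 2/h². Then all off-diagonal entries b_ℓ, c_ℓ are positive, and every complex eigenvalue of A is real and lies in the interval [−4/h², 0]; in particular all eigenvalues of A are nonpositive. -/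
/-- A complex eigenvalue of a real matrix `M` that is symmetric for the weighted inner product
`∑ dᵢ x̄ᵢ yᵢ` with positive weights is real. -/
lemma im_eq_zero_of_symmetrizable {n : ℕ} (M : Matrix (Fin n) (Fin n) ℝ) (d : Fin n → ℝ)
    (hd : ∀ i, 0 < d i) (hM : ∀ i j, d i * M i j = d j * M j i) (μ : ℂ) (v : Fin n → ℂ)
    (hv : v ≠ 0) (hμ : (M.map (algebraMap ℝ ℂ)).mulVec v = μ • v) : μ.im = 0 := by
  set r : ℝ := ∑ i, d i * Complex.normSq (v i) with hr
  have hr0 : 0 < r := by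
    obtain ⟨i, hi⟩ := Function.ne_iff.mp hv
    exact Finset.sum_pos' (fun j _ => mul_nonneg (hd j).le (Complex.normSq_nonneg _))
      ⟨i, Finset.mem_univ _, mul_pos (hd i) (Complex.normSq_pos.mpr hi)⟩
  set S : ℂ := ∑ i, ∑ j, (d i : ℂ) * (starRingEnd ℂ) (v i) * ((M i j : ℂ) * v j) with hS
  have hSr : S = μ * (r : ℂ) := by
    rw [hS, hr, Complex.ofReal_sum, Finset.mul_sum]
    refine Finset.sum_congr rfl fun i _ => ?_
    have hi : ∑ j, (M i j : ℂ) * v j = μ * v i := by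
      have := congrFun hμ i
      simpa [Matrix.mulVec, dotProduct] using this
    rw [← Finset.mul_sum, hi, Complex.ofReal_mul, Complex.normSq_eq_conj_mul_self]
    ring
  have hSc : (starRingEnd ℂ) S = S := by
    rw [hS]
    simp only [map_sum, map_mul, Complex.conj_conj, Complex.conj_ofReal]
    rw [Finset.sum_comm]
    refine Finset.sum_congr rfl fun i _ => Finset.sum_congr rfl fun j _ => ?_
    have hij : (d i : ℂ) * (M i j : ℂ) = (d j : ℂ) * (M j i : ℂ) := by exact_mod_cast hM i j
    linear_combination (-(v j * (starRingEnd ℂ) (v i))) * hij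
  have him : S.im = 0 := Complex.conj_eq_iff_im.mp hSc
  rw [hSr, Complex.im_mul_ofReal] at him
  exact (mul_eq_zero.mp him).resolve_right hr0.ne'

/-- Symmetrizing weights for a tridiagonal matrix need only be checked on neighbouring entries. -/
lemma tridiag_symmetrizable {n : ℕ} (c a b d : ℕ → ℝ)
    (hd : ∀ ℓ, 1 ≤ ℓ → ℓ ≤ n - 1 → d ℓ * b ℓ = d (ℓ + 1) * c ℓ) (i j : Fin n) :
    d (i + 1) * tridiag n c a b i j = d (j + 1) * tridiag n c a b j i := by
  have hi := i.2
  have hj := j.2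
  simp only [tridiag, Matrix.of_apply]
  rcases lt_trichotomy (i : ℕ) (j : ℕ) with hij | hij | hij
  · by_cases h1 : (i : ℕ) + 1 = j
    · have := hd (i + 1) (by omega) (by omega)
      rw [if_neg (by omega), if_pos h1, if_neg (by omega), if_neg (by omega), if_pos h1, this, h1]
    · rw [if_neg (by omega), if_neg h1, if_neg (by omega), if_neg (by omega), if_neg (by omega),
        if_neg h1]
      simp
  · simp [hij]
  · by_cases h1 : (j : ℕ) + 1 = i
    · have := hd (j + 1) (by omega) (by omega)
      rw [if_neg (by omega), if_neg (by omega), if_pos h1, if_neg (by omega), if_pos h1, this, h1]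
    · rw [if_neg (by omega), if_neg (by omega), if_neg h1, if_neg (by omega), if_neg h1,
        if_neg (by omega)]
      simp

/-- Gershgorin radii of a tridiagonal matrix with nonnegative off-diagonal entries. The two
summands are the entries to the right and to the left of the diagonal; each is absent in one
extreme row. -/
lemma tridiag_radius_le {n : ℕ} (c a b : ℕ → ℝ)
    (hpos : ∀ ℓ, 1 ≤ ℓ → ℓ ≤ n - 1 → 0 < b ℓ ∧ 0 < c ℓ) (k : Fin n) :
    ∑ j ∈ Finset.univ.erase k, ‖(tridiag n c a b).map (algebraMap ℝ ℂ) k j‖ ≤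
      (if (k : ℕ) + 1 < n then b (k + 1) else 0) + (if 0 < (k : ℕ) then c k else 0) := by
  have hk := k.2
  let g : ℕ → ℝ := fun j =>
    (if (k : ℕ) + 1 = j then b (k + 1) else 0) + (if j + 1 = (k : ℕ) then c k else 0)
  have hg : ∀ j : Fin n, 0 ≤ g j := by
    intro j
    have hj := j.2
    refine add_nonneg ?_ ?_ <;> split_ifs
    · exact (hpos _ (by omega) (by omega)).1.le
    · exact le_rfl
    · exact (hpos _ (by omega) (by omega)).2.le
    · exact le_rfl
  calc _ = ∑ j ∈ Finset.univ.erase k, g j := by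
        refine Finset.sum_congr rfl fun j hj => ?_
        have hjk : (k : ℕ) ≠ j := fun e => Finset.ne_of_mem_erase hj (Fin.ext e.symm)
        have e : tridiag n c a b k j = g j := by
          simp only [tridiag, Matrix.of_apply, g, if_neg hjk]
          by_cases h1 : (k : ℕ) + 1 = j
          · rw [if_pos h1, if_pos h1, if_neg (by omega), add_zero]
          · rw [if_neg h1, if_neg h1, zero_add]
            by_cases h2 : (j : ℕ) + 1 = k
            · rw [if_pos h2, if_pos h2, h2]
            · rw [if_neg h2, if_neg h2]
        rw [Matrix.map_apply, e, norm_algebraMap', Real.norm_of_nonneg (hg j)]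
    _ ≤ ∑ j : Fin n, g j :=
        Finset.sum_le_sum_of_subset_of_nonneg (Finset.erase_subset _ _) fun j _ _ => hg j
    _ = ∑ j ∈ Finset.range n, g j := Fin.sum_univ_eq_sum_range g n
    _ = _ := by
        simp only [g, Finset.sum_add_distrib, Finset.sum_ite_eq, Finset.mem_range]
        congr 1
        rcases Nat.eq_zero_or_pos (k : ℕ) with h0 | h0
        · simp [h0]
        · rw [if_pos h0, Finset.sum_eq_single_of_mem ((k : ℕ) - 1)
            (Finset.mem_range.mpr (by omega)) fun j _ hj => if_neg (by omega)]
          exact if_pos (by omega)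

/-- The matrix `A_{ρ,3}` (diagonal `−2/h²`, superdiagonal `b_ℓ = (ℓ+1)/(ℓh²)`,
subdiagonal `c_ℓ = ℓ/((ℓ+1)h²)` for `ℓ ≤ n−2` and `c_{n−1} = 2/h²`) has positive
off-diagonal entries, and all of its complex eigenvalues are real and lie in
`[−4/h², 0]`; in particular they are nonpositive. -/
theorem A_rho3_spectrum
    (n : ℕ) (hn : 2 ≤ n) (h : ℝ) (hh : 0 < h) :
    let a : ℕ → ℝ := fun _ => -2 / h ^ 2
    let b : ℕ → ℝ := fun ℓ => ((ℓ : ℝ) + 1) / ((ℓ : ℝ) * h ^ 2)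
    let c : ℕ → ℝ := fun ℓ =>
      if ℓ = n - 1 then 2 / h ^ 2 else (ℓ : ℝ) / (((ℓ : ℝ) + 1) * h ^ 2)
    (∀ ℓ, 1 ≤ ℓ → ℓ ≤ n - 1 → 0 < b ℓ ∧ 0 < c ℓ) ∧
    ∀ μ ∈ spectrum ℂ ((tridiag n c a b).map (algebraMap ℝ ℂ)),
      μ.im = 0 ∧ -4 / h ^ 2 ≤ μ.re ∧ μ.re ≤ 0 := by
  intro a b c
  have hh2 : 0 < h ^ 2 := by positivity
  have hpos : ∀ ℓ, 1 ≤ ℓ → ℓ ≤ n - 1 → 0 < b ℓ ∧ 0 < c ℓ := by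
    intro ℓ h1 _
    have hℓ : (0 : ℝ) < ℓ := by exact_mod_cast h1
    refine ⟨by simp only [b]; positivity, ?_⟩
    simp only [c]
    split_ifs <;> positivity
  refine ⟨hpos, fun μ hμ => ?_⟩
  have hev : Module.End.HasEigenvalue
      (Matrix.toLin' ((tridiag n c a b).map (algebraMap ℝ ℂ))) μ := by
    rw [Module.End.hasEigenvalue_iff_mem_spectrum, Matrix.spectrum_toLin']
    exact hμ
  have him : μ.im = 0 := by
    obtain ⟨v, hv⟩ := hev.exists_hasEigenvector
    -- The weights solve `d ℓ * b ℓ = d (ℓ + 1) * c ℓ` with `d 1 = 1`;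
    -- the Neumann row breaks the pattern `ℓ ^ 2`.
    let d : ℕ → ℝ := fun ℓ => if ℓ = n then ((n : ℝ) - 1) * n / 2 else (ℓ : ℝ) ^ 2
    have hn' : (2 : ℝ) ≤ n := by exact_mod_cast hn
    refine im_eq_zero_of_symmetrizable (tridiag n c a b) (fun i => d (i + 1)) (fun i => ?_)
      (fun i j => tridiag_symmetrizable c a b d ?_ i j) μ v hv.2
      (by simpa using hv.apply_eq_smul)
    · simp only [d]
      split_ifs
      · have : (0 : ℝ) < n - 1 := by linarith
        positivity
      · positivity
    · intro ℓ h1 h2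
      have hℓ : (0 : ℝ) < ℓ := by exact_mod_cast h1
      simp only [d, b, c]
      rw [if_neg (by omega : ¬ ℓ = n)]
      by_cases h3 : ℓ = n - 1
      · rw [if_pos (by omega), if_pos h3]
        have : (n : ℝ) = ℓ + 1 := by exact_mod_cast (by omega : n = ℓ + 1)
        rw [this]
        field_simp
        ring
      · rw [if_neg (by omega), if_neg h3]
        push_cast
        field_simp
  obtain ⟨k, hk⟩ := eigenvalue_mem_ball hev
  have hrad : (if (k : ℕ) + 1 < n then b (k + 1) else 0) + (if 0 < (k : ℕ) then c k else 0)
      ≤ 2 / h ^ 2 := by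
    have hkn := k.2
    simp only [b, c]
    rcases Nat.eq_zero_or_pos (k : ℕ) with h0 | h0
    · rw [if_pos (by omega), h0]
      norm_num
    · have hk0 : (0 : ℝ) < (k : ℕ) := by exact_mod_cast h0
      rw [if_pos h0]
      by_cases h1 : (k : ℕ) + 1 < n
      · rw [if_pos h1, if_neg (by omega)]
        push_cast
        apply le_of_eq
        field_simp
        ring
      · rw [if_neg h1, if_pos (by omega), zero_add]
  have hdiag : (tridiag n c a b).map (algebraMap ℝ ℂ) k k = ((-2 / h ^ 2 : ℝ) : ℂ) := by
    simp [tridiag, a]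
  rw [Metric.mem_closedBall, dist_eq_norm, hdiag] at hk
  have hre := (Complex.abs_re_le_norm _).trans
    (hk.trans ((tridiag_radius_le c a b hpos k).trans hrad))
  rw [Complex.sub_re, Complex.ofReal_re, abs_le] at hre
  have e2 : -2 / h ^ 2 = -(2 / h ^ 2) := by ring
  have e4 : -4 / h ^ 2 = -(2 / h ^ 2) - 2 / h ^ 2 := by ring
  rw [e2] at hre
  refine ⟨him, ?_, ?_⟩
  · rw [e4]; linarith [hre.1]
  · linarith [hre.2]
end

section
/- For every real y with 0 < y < π/2 one has the double inequality 1/y + 1/(y−π) < cot(y) < 1/y, where cot(y) = cos(y)/sin(y). -/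
/-!
The upper bound is `y < tan y`. For the lower bound, clearing denominators turns it into positivity
on `(0, π/2)` of `cotGap t = t (π - t) cos t - (π - 2 t) sin t`. On differentiating, two terms
cancel, leaving `(2 - t (π - t)) sin t`. As `t (π - t)` increases on `[0, π/2]`, this derivative
changes sign at most once, from positive to negative. Since `cotGap` vanishes at both endpoints,
it is positive in between.
-/

/-- The numerator of `cot t - (1 / t + 1 / (t - π))` over the common denominator
`t (π - t) sin t`. -/
noncomputable def cotGap (t : ℝ) : ℝ :=
  t * (Real.pi - t) * Real.cos t - (Real.pi - 2 * t) * Real.sin t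

lemma hasDerivAt_cotGap (t : ℝ) :
    HasDerivAt cotGap ((2 - t * (Real.pi - t)) * Real.sin t) t := by
  have h1 := ((hasDerivAt_id t).mul ((hasDerivAt_id t).const_sub Real.pi)).mul
    (Real.hasDerivAt_cos t)
  have h2 := (((hasDerivAt_id t).const_mul 2).const_sub Real.pi).mul (Real.hasDerivAt_sin t)
  refine (h1.sub h2).congr_deriv ?_
  simp only [id, Pi.mul_apply]
  ring

lemma cotGap_pos {y : ℝ} (h0 : 0 < y) (h1 : y < Real.pi / 2) : 0 < cotGap y := by
  have hc : Continuous cotGap :=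
    continuous_iff_continuousAt.2 fun t => (hasDerivAt_cotGap t).continuousAt
  -- The sign of the derivative at `y` decides which endpoint `y` can be compared with by monotonicity.
  rcases le_or_gt (y * (Real.pi - y)) 2 with h | h
  · have hm : StrictMonoOn cotGap (Set.Icc 0 y) := by
      refine strictMonoOn_of_deriv_pos (convex_Icc _ _) hc.continuousOn fun t ht => ?_
      rw [interior_Icc] at ht
      rw [(hasDerivAt_cotGap t).deriv]
      refine mul_pos ?_ (Real.sin_pos_of_pos_of_lt_pi ht.1 (by linarith [ht.2]))
      nlinarith [mul_pos (sub_pos.2 ht.2) (show 0 < Real.pi - y - t by linarith [ht.2])]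
    have := hm (Set.left_mem_Icc.2 h0.le) (Set.right_mem_Icc.2 h0.le) h0
    simpa [cotGap] using this
  · have hm : StrictAntiOn cotGap (Set.Icc y (Real.pi / 2)) := by
      refine strictAntiOn_of_deriv_neg (convex_Icc _ _) hc.continuousOn fun t ht => ?_
      rw [interior_Icc] at ht
      rw [(hasDerivAt_cotGap t).deriv]
      refine mul_neg_of_neg_of_pos ?_
        (Real.sin_pos_of_pos_of_lt_pi (h0.trans ht.1) (by linarith [ht.2]))
      nlinarith [mul_pos (sub_pos.2 ht.1) (show 0 < Real.pi - y - t by linarith [ht.2])]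
    have := hm (Set.left_mem_Icc.2 h1.le) (Set.right_mem_Icc.2 h1.le) h1
    have hz : cotGap (Real.pi / 2) = 0 := by
      simp only [cotGap, Real.cos_pi_div_two]
      ring
    rwa [hz] at this

/-- For `0 < y < π/2` one has `1/y + 1/(y−π) < cot y < 1/y`. -/
theorem cot_double_inequality (y : ℝ) (h0 : 0 < y) (h1 : y < Real.pi / 2) :
    1 / y + 1 / (y - Real.pi) < Real.cot y ∧ Real.cot y < 1 / y := by
  have hp : 0 < Real.pi - y := by linarith
  have hs : 0 < Real.sin y := Real.sin_pos_of_pos_of_lt_pi h0 (by linarith)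
  have hcos : 0 < Real.cos y := Real.cos_pos_of_mem_Ioo ⟨by linarith, h1⟩
  rw [Real.cot_eq_cos_div_sin]
  constructor
  · have hne : y - Real.pi ≠ 0 := by linarith
    have key : Real.cos y / Real.sin y - (1 / y + 1 / (y - Real.pi))
        = cotGap y / (y * (Real.pi - y) * Real.sin y) := by
      rw [cotGap]
      field_simp
      ring
    have := div_pos (cotGap_pos h0 h1) (mul_pos (mul_pos h0 hp) hs)
    linarith
  · have ht := Real.lt_tan h0 h1
    rw [Real.tan_eq_sin_div_cos, lt_div_iff₀ hcos] at ht
    rw [div_lt_div_iff₀ hs h0]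
    linarith
end

section
/- Fix an integer n ≥ 2 and define f : (0, 1/2) → ℝ by f(x) = cot(xπ/(n−1+2x)) − 2(n−1+2x)/π. Then f has exactly one zero in the open interval (0, 1/2). Equivalently, the nonlinear system h = (π − 2σh)/(n−1), cot(σh) = 2/h has a unique solution (σ, h) with σ ∈ (0, 1/2) and h > 0. -/
/-!
Write `m = n - 1 ≥ 1` and `θ(x) = xπ/(m + 2x)`. On `[0, 1/2]` the angle `θ` increases strictly and
stays in `[0, π/2)`. Clearing the denominators `sin θ` and `π`, the zeros of `f` are those of
`F(x) = π cos θ(x) - 2(m + 2x) sin θ(x)`, which is strictly decreasing since `cos` decreases and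
`sin` increases on `[0, π/2]`. Moreover `F(0) = π > 0`, and at `x = 1/2`, where `θ = π/(2(m + 1))`,
`F(1/2) = 2(m + 1)(θ cos θ - sin θ) < 0` because `θ < tan θ`. The intermediate value theorem
therefore gives exactly one zero. In the system, the first equation says `h = π/(m + 2σ)`, and
substituting this turns the second one into `f(σ) = 0`.
-/

/-- The angle `θ(x) = xπ/(m + 2x)`, the argument of the cotangent when `m = n - 1`. -/
noncomputable def cotAngle (m x : ℝ) : ℝ := x * Real.pi / (m + 2 * x)

/-- The function `f` multiplied by `π sin θ(x)`. -/
noncomputable def clearedF (m x : ℝ) : ℝ :=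
  Real.pi * Real.cos (cotAngle m x) - 2 * (m + 2 * x) * Real.sin (cotAngle m x)

lemma cotAngle_strictMono {m x y : ℝ} (hm : 1 ≤ m) (hx : 0 ≤ x) (hxy : x < y) :
    cotAngle m x < cotAngle m y := by
  unfold cotAngle
  rw [div_lt_div_iff₀ (by linarith) (by linarith)]
  have h : 0 < Real.pi * m * (y - x) :=
    mul_pos (mul_pos Real.pi_pos (by linarith)) (by linarith)
  nlinarith

lemma cotAngle_nonneg {m x : ℝ} (hm : 1 ≤ m) (hx : 0 ≤ x) : 0 ≤ cotAngle m x :=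
  div_nonneg (mul_nonneg hx Real.pi_pos.le) (by linarith)

lemma cotAngle_pos {m x : ℝ} (hm : 1 ≤ m) (hx : 0 < x) : 0 < cotAngle m x :=
  div_pos (mul_pos hx Real.pi_pos) (by linarith)

lemma cotAngle_lt {m x : ℝ} (hm : 1 ≤ m) (hx : 0 ≤ x) : cotAngle m x < Real.pi / 2 := by
  unfold cotAngle
  rw [div_lt_div_iff₀ (by linarith) (by norm_num)]
  have h : 0 < Real.pi * m := mul_pos Real.pi_pos (by linarith)
  nlinarith

lemma sin_cotAngle_pos {m x : ℝ} (hm : 1 ≤ m) (hx : 0 < x) : 0 < Real.sin (cotAngle m x) :=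
  Real.sin_pos_of_pos_of_lt_pi (cotAngle_pos hm hx)
    (by have := cotAngle_lt hm hx.le; linarith [Real.pi_pos])

lemma clearedF_strictAnti {m x y : ℝ} (hm : 1 ≤ m) (hx : 0 ≤ x) (hxy : x < y) :
    clearedF m y < clearedF m x := by
  have hy : 0 < y := hx.trans_lt hxy
  have h0 := cotAngle_nonneg hm hx
  have h1 := cotAngle_strictMono hm hx hxy
  have h2 := cotAngle_lt hm hy.le
  have hc : Real.cos (cotAngle m y) < Real.cos (cotAngle m x) :=
    Real.cos_lt_cos_of_nonneg_of_le_pi_div_two h0 h2.le h1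
  have hs : Real.sin (cotAngle m x) < Real.sin (cotAngle m y) :=
    Real.sin_lt_sin_of_lt_of_le_pi_div_two (by linarith) h2.le h1
  have hs0 := (sin_cotAngle_pos hm hy).le
  have hA : Real.pi * Real.cos (cotAngle m y) < Real.pi * Real.cos (cotAngle m x) :=
    mul_lt_mul_of_pos_left hc Real.pi_pos
  have hB : 2 * (m + 2 * x) * Real.sin (cotAngle m x) ≤
      2 * (m + 2 * y) * Real.sin (cotAngle m y) :=
    mul_le_mul (by linarith) hs.le
      (Real.sin_nonneg_of_nonneg_of_le_pi h0 (by linarith [Real.pi_pos])) (by linarith)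
  unfold clearedF
  linarith

lemma clearedF_half_neg {m : ℝ} (hm : 1 ≤ m) : clearedF m (1 / 2) < 0 := by
  have hpos := cotAngle_pos hm (x := 1 / 2) (by norm_num)
  have hlt := cotAngle_lt hm (x := 1 / 2) (by norm_num)
  have hc : 0 < Real.cos (cotAngle m (1 / 2)) :=
    Real.cos_pos_of_mem_Ioo ⟨by linarith, hlt⟩
  have ht := Real.lt_tan hpos hlt
  rw [Real.tan_eq_sin_div_cos, lt_div_iff₀ hc] at ht
  have hpi : Real.pi = 2 * (m + 1) * cotAngle m (1 / 2) := by
    unfold cotAngle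
    have : m + 2 * (1 / 2) ≠ 0 := by linarith
    field_simp
  have key : clearedF m (1 / 2) = 2 * (m + 1) *
      (cotAngle m (1 / 2) * Real.cos (cotAngle m (1 / 2)) - Real.sin (cotAngle m (1 / 2))) := by
    unfold clearedF
    linear_combination Real.cos (cotAngle m (1 / 2)) * hpi
  rw [key]
  exact mul_neg_of_pos_of_neg (by linarith) (by linarith)

lemma continuousOn_clearedF {m : ℝ} (hm : 1 ≤ m) :
    ContinuousOn (clearedF m) (Set.Icc 0 (1 / 2)) := by
  have h : ContinuousOn (cotAngle m) (Set.Icc 0 (1 / 2)) := by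
    unfold cotAngle
    refine ContinuousOn.div (by fun_prop) (by fun_prop) ?_
    intro x hx
    linarith [hx.1]
  unfold clearedF
  fun_prop

lemma existsUnique_clearedF {m : ℝ} (hm : 1 ≤ m) :
    ∃! x : ℝ, x ∈ Set.Ioo (0 : ℝ) (1 / 2) ∧ clearedF m x = 0 := by
  have h0 : 0 < clearedF m 0 := by simp [clearedF, cotAngle, Real.pi_pos]
  obtain ⟨x, hx, hx0⟩ := intermediate_value_Ioo' (by norm_num) (continuousOn_clearedF hm)
    ⟨clearedF_half_neg hm, h0⟩
  refine ⟨x, ⟨hx, hx0⟩, ?_⟩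
  rintro y ⟨hy, hy0⟩
  rcases lt_trichotomy y x with h | h | h
  · linarith [clearedF_strictAnti hm hy.1.le h]
  · exact h
  · linarith [clearedF_strictAnti hm hx.1.le h]

lemma f_eq_zero_iff {m x : ℝ} (hm : 1 ≤ m) (hx : 0 < x) :
    Real.cot (x * Real.pi / (m + 2 * x)) - 2 * (m + 2 * x) / Real.pi = 0 ↔
      clearedF m x = 0 := by
  have hs := sin_cotAngle_pos hm hx
  change Real.cot (cotAngle m x) - _ = 0 ↔ _
  unfold clearedF
  rw [Real.cot_eq_cos_div_sin, sub_eq_zero, sub_eq_zero,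
    div_eq_div_iff hs.ne' Real.pi_pos.ne', mul_comm (Real.cos _)]

/-- On `0 < σ`, the system is equivalent to `h = π/(m + 2σ)` together with `f(σ) = 0`. -/
lemma system_iff {m s h : ℝ} (hm : 1 ≤ m) (hs : 0 < s) :
    (0 < h ∧ h = (Real.pi - 2 * s * h) / m ∧ Real.cot (s * h) = 2 / h) ↔
      (h = Real.pi / (m + 2 * s) ∧
        Real.cot (s * Real.pi / (m + 2 * s)) - 2 * (m + 2 * s) / Real.pi = 0) := by
  have hm0 : 0 < m := by linarith
  have hd : 0 < m + 2 * s := by linarith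
  have hlin : h = (Real.pi - 2 * s * h) / m ↔ h = Real.pi / (m + 2 * s) := by
    rw [eq_div_iff hm0.ne', eq_div_iff hd.ne']
    constructor <;> intro H <;> linarith
  rw [hlin]
  have hcot : h = Real.pi / (m + 2 * s) → (Real.cot (s * h) = 2 / h ↔
      Real.cot (s * Real.pi / (m + 2 * s)) - 2 * (m + 2 * s) / Real.pi = 0) := by
    rintro rfl
    rw [sub_eq_zero, mul_div_assoc, div_div_eq_mul_div]
  constructor
  · rintro ⟨-, h1, h2⟩
    exact ⟨h1, (hcot h1).1 h2⟩
  · rintro ⟨h1, h2⟩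
    exact ⟨h1 ▸ div_pos Real.pi_pos hd, h1, (hcot h1).2 h2⟩

/-- For every integer `n ≥ 2`, the function
`f(x) = cot(xπ/(n−1+2x)) − 2(n−1+2x)/π` has exactly one zero in `(0, 1/2)`;
equivalently, the nonlinear system `h = (π − 2σh)/(n−1)`, `cot(σh) = 2/h`
has a unique solution `(σ, h)` with `σ ∈ (0,1/2)` and `h > 0`. -/
theorem unique_zero_of_f (n : ℕ) (hn : 2 ≤ n) :
    (∃! x : ℝ, x ∈ Set.Ioo (0 : ℝ) (1 / 2) ∧
      Real.cot (x * Real.pi / ((n : ℝ) - 1 + 2 * x)) -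
        2 * ((n : ℝ) - 1 + 2 * x) / Real.pi = 0) ∧
    (∃! p : ℝ × ℝ, p.1 ∈ Set.Ioo (0 : ℝ) (1 / 2) ∧ 0 < p.2 ∧
      p.2 = (Real.pi - 2 * p.1 * p.2) / ((n : ℝ) - 1) ∧
      Real.cot (p.1 * p.2) = 2 / p.2) := by
  have hn' : (2 : ℝ) ≤ n := by exact_mod_cast hn
  have hm : (1 : ℝ) ≤ (n : ℝ) - 1 := by linarith
  generalize (n : ℝ) - 1 = m at hm ⊢
  obtain ⟨x, ⟨hx, hx0⟩, hux⟩ := existsUnique_clearedF hm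
  constructor
  · exact ⟨x, ⟨hx, (f_eq_zero_iff hm hx.1).2 hx0⟩,
      fun y hy => hux y ⟨hy.1, (f_eq_zero_iff hm hy.1.1).1 hy.2⟩⟩
  · refine ⟨(x, Real.pi / (m + 2 * x)),
      ⟨hx, (system_iff hm hx.1).2 ⟨rfl, (f_eq_zero_iff hm hx.1).2 hx0⟩⟩, ?_⟩
    rintro ⟨s, h⟩ ⟨hs, hsys⟩
    obtain ⟨h1, h2⟩ := (system_iff hm hs.1).1 hsys
    obtain rfl : s = x := hux s ⟨hs, (f_eq_zero_iff hm hs.1).1 h2⟩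
    exact Prod.ext rfl h1
end

section
/- Fix an integer n ≥ 2 and let σ ∈ (0, 1/2) be the unique zero in (0,1/2) of f(x) = cot(xπ/(n−1+2x)) − 2(n−1+2x)/π. Then σ satisfies the lower bound σ > ( −(n−1) + √(n²−1) ) / 2; equivalently, σ² + (n−1)σ − (n−1)/2 > 0. -/
/-!
Put `L = n - 1 + 2σ` and `y = σπ / L`. As `n - 1 ≥ 1` and `σ < 1/2`, `y` lies in `(0, π/4)`.
The equation `cot y = 2L/π` says `y cot y = 2σ`, and clearing denominators turns the quadratic
inequality into `(π - y) * (y cot y) > π - 2y`. The bounds `sin y < y` and `cos y ≥ 1 - y²/2` give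
`y cot y > 1 - y²/2`, so it suffices that `y (π - y) ≤ 2`, which holds for `y < π/4`
because `3π²/16 < 2`. Completing the square gives the form with the square root.
-/

/-- The unique zero `σ ∈ (0,1/2)` of `f(x) = cot(xπ/(n−1+2x)) − 2(n−1+2x)/π` satisfies
`σ² + (n−1)σ − (n−1)/2 > 0`, i.e. `σ > (−(n−1) + √(n²−1))/2`. -/
theorem sigma_lower_bound (n : ℕ) (hn : 2 ≤ n) (σ : ℝ)
    (hσ : σ ∈ Set.Ioo (0 : ℝ) (1 / 2))
    (hzero : Real.cot (σ * Real.pi / ((n : ℝ) - 1 + 2 * σ)) -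
      2 * ((n : ℝ) - 1 + 2 * σ) / Real.pi = 0) :
    σ ^ 2 + ((n : ℝ) - 1) * σ - ((n : ℝ) - 1) / 2 > 0 ∧
    σ > (-((n : ℝ) - 1) + Real.sqrt ((n : ℝ) ^ 2 - 1)) / 2 := by
  obtain ⟨h0, h1⟩ := hσ
  have hm : (1 : ℝ) ≤ (n : ℝ) - 1 := by
    have : (2 : ℝ) ≤ n := by exact_mod_cast hn
    linarith
  have hπ := Real.pi_pos
  have hquad : σ ^ 2 + ((n : ℝ) - 1) * σ - ((n : ℝ) - 1) / 2 > 0 := by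
    generalize (n : ℝ) - 1 = m at *
    have hL : 0 < m + 2 * σ := by linarith
    obtain ⟨y, hy⟩ : ∃ y, y = σ * Real.pi / (m + 2 * σ) := ⟨_, rfl⟩
    rw [← hy] at hzero
    have hyL : y * (m + 2 * σ) = σ * Real.pi := by rw [hy]; field_simp
    have hy0 : 0 < y := by rw [hy]; positivity
    have hy4 : y < Real.pi / 4 := by
      rw [hy, div_lt_iff₀ hL]
      nlinarith
    have hs : 0 < Real.sin y := Real.sin_pos_of_pos_of_lt_pi hy0 (by linarith)
    have hsy : Real.sin y < y := Real.sin_lt hy0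
    have hc : 0 < Real.cos y := Real.cos_pos_of_mem_Ioo ⟨by linarith, by linarith⟩
    have hcos : 1 - y ^ 2 / 2 ≤ Real.cos y := Real.one_sub_sq_div_two_le_cos
    have hycot : y * Real.cot y = 2 * σ := by
      have : Real.cot y = 2 * (m + 2 * σ) / Real.pi := by linarith
      rw [this, ← mul_div_assoc, div_eq_iff hπ.ne']
      linarith
    have hlow : 1 - y ^ 2 / 2 < 2 * σ := by
      refine hcos.trans_lt ?_
      rw [← hycot, Real.cot_eq_cos_div_sin, ← mul_div_assoc, lt_div_iff₀ hs]
      nlinarith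
    have hprod : y * (Real.pi - y) < 2 := by
      have := Real.pi_lt_d2
      nlinarith [mul_pos (sub_pos.2 hy4) hπ]
    have hkey : Real.pi - 2 * y < (Real.pi - y) * (2 * σ) := by
      have h2 := mul_lt_mul_of_pos_left hlow (show 0 < Real.pi - y by linarith)
      nlinarith [mul_pos hy0 (sub_pos.2 hprod)]
    -- Multiply by `L` and eliminate `y` through `y * L = σ * π`; a factor `π` then cancels.
    have h3 := mul_lt_mul_of_pos_right hkey hL
    have h4 : 0 < Real.pi * (σ ^ 2 + m * σ - m / 2) := by
      linear_combination h3 / 2 + (1 - σ) * hyL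
    exact pos_of_mul_pos_right h4 hπ.le
  refine ⟨hquad, ?_⟩
  have : Real.sqrt ((n : ℝ) ^ 2 - 1) < 2 * σ + ((n : ℝ) - 1) := by
    rw [Real.sqrt_lt' (by linarith)]
    nlinarith
  linarith
end

section
/- For each integer n ≥ 2 let σ_n ∈ (0, 1/2) be the unique zero in (0,1/2) of f_n(x) = cot(xπ/(n−1+2x)) − 2(n−1+2x)/π. Then σ_n → 1/2 as n → ∞. -/
/-!
Write `N = n - 1 + 2σ_n` and `y = σ_n π / N`. Multiplying the equation `cot y = 2N/π` by `y` gives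
`y cot y = 2σ_n`. Since `sin y ≤ y`, this yields `cos y ≤ 2σ_n < 1`; and `0 < y ≤ (π/2)/(n-1)`
forces `y → 0`, so the squeeze theorem gives `2σ_n → 1`.
-/

/-- If `σ_n ∈ (0,1/2)` denotes (for each `n ≥ 2`) the unique zero in `(0,1/2)` of
`f_n(x) = cot(xπ/(n−1+2x)) − 2(n−1+2x)/π`, then `σ_n → 1/2` as `n → ∞`. -/
theorem sigma_tendsto_half (σ : ℕ → ℝ)
    (hσ : ∀ n : ℕ, 2 ≤ n → σ n ∈ Set.Ioo (0 : ℝ) (1 / 2) ∧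
      Real.cot (σ n * Real.pi / ((n : ℝ) - 1 + 2 * σ n)) -
        2 * ((n : ℝ) - 1 + 2 * σ n) / Real.pi = 0) :
    Filter.Tendsto σ Filter.atTop (nhds (1 / 2)) := by
  set y : ℕ → ℝ := fun n => σ n * Real.pi / ((n : ℝ) - 1 + 2 * σ n) with hy
  have hpi := Real.pi_pos
  have hbound : ∀ n : ℕ, 2 ≤ n → 0 < y n ∧ y n ≤ Real.pi / 2 / ((n : ℝ) - 1) ∧
      Real.cos (y n) / 2 ≤ σ n := by
    intro n hn
    obtain ⟨⟨h0, h1⟩, heq⟩ := hσ n hn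
    have hn' : (2 : ℝ) ≤ n := by exact_mod_cast hn
    have hN : 0 < (n : ℝ) - 1 + 2 * σ n := by linarith
    have hypos : 0 < y n := div_pos (mul_pos h0 hpi) hN
    have hyle : y n ≤ Real.pi / 2 / ((n : ℝ) - 1) := by
      apply div_le_div₀ (by positivity) _ (by linarith) (by linarith)
      nlinarith
    have hylt : y n < Real.pi := by
      refine (div_lt_iff₀ hN).2 ?_
      nlinarith
    have hsin : 0 < Real.sin (y n) := Real.sin_pos_of_pos_of_lt_pi hypos hylt
    have hcot : y n * Real.cot (y n) = 2 * σ n := by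
      have hc : Real.cot (y n) = 2 * ((n : ℝ) - 1 + 2 * σ n) / Real.pi := sub_eq_zero.1 heq
      rw [hc]
      simp only [hy]
      generalize (n : ℝ) - 1 + 2 * σ n = N at hN
      field_simp
    have hmul : y n * Real.cos (y n) = 2 * σ n * Real.sin (y n) := by
      rw [← hcot, Real.cot_eq_cos_div_sin]
      field_simp
    refine ⟨hypos, hyle, ?_⟩
    -- `y cos y = 2σ sin y ≤ 2σ y`, and `y > 0` can be cancelled.
    have hs : Real.sin (y n) ≤ y n := Real.sin_le hypos.le
    have hle : y n * Real.cos (y n) ≤ y n * (2 * σ n) := by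
      rw [hmul]
      nlinarith
    have := le_of_mul_le_mul_left hle hypos
    linarith
  have hy0 : Filter.Tendsto y Filter.atTop (nhds 0) := by
    have hlim : Filter.Tendsto (fun n : ℕ => Real.pi / 2 / ((n : ℝ) - 1)) Filter.atTop (nhds 0) :=
      Filter.Tendsto.const_div_atTop
        (Filter.tendsto_atTop_add_const_right _ (-1) tendsto_natCast_atTop_atTop) _
    refine tendsto_of_tendsto_of_tendsto_of_le_of_le' tendsto_const_nhds hlim ?_ ?_
    · filter_upwards [Filter.eventually_ge_atTop 2] with n hn using (hbound n hn).1.le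
    · filter_upwards [Filter.eventually_ge_atTop 2] with n hn using (hbound n hn).2.1
  have hcos : Filter.Tendsto (fun n => Real.cos (y n) / 2) Filter.atTop (nhds (1 / 2)) := by
    have h := ((Real.continuous_cos.tendsto 0).comp hy0).div_const 2
    rwa [Real.cos_zero] at h
  refine tendsto_of_tendsto_of_tendsto_of_le_of_le' hcos tendsto_const_nhds ?_ ?_
  · filter_upwards [Filter.eventually_ge_atTop 2] with n hn using (hbound n hn).2.2
  · filter_upwards [Filter.eventually_ge_atTop 2] with n hn using (hσ n hn).1.2.le
end

section
/- Fix an integer n ≥ 3, and let σ ∈ (0,1/2) and h > 0 satisfy h(n−1+2σ) = π and cot(σh) = 2/h. Let A_φ be the n×n real tridiagonal matrix with diagonal entries a_ℓ = −2/h², superdiagonal entries b_ℓ = 1/h² + cot((σ+ℓ−1)h)/(2h) for ℓ = 1,…,n−1, and subdiagonal entries c_ℓ = b_{n−ℓ} for ℓ = 1,…,n−1. Then b_ℓ > 0 and c_ℓ > 0 for all ℓ = 1,…,n−1, and every complex eigenvalue of A_φ is real and nonpositive. -/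
theorem cot_lt_cot_of_lt {x y : ℝ} (hx : 0 < x) (hxy : x < y) (hy : y < Real.pi) :
    Real.cot y < Real.cot x := by
  have hsx : 0 < Real.sin x := Real.sin_pos_of_pos_of_lt_pi hx (by linarith)
  have hsy : 0 < Real.sin y := Real.sin_pos_of_pos_of_lt_pi (by linarith) hy
  have hs : 0 < Real.sin (y - x) := Real.sin_pos_of_pos_of_lt_pi (by linarith) (by linarith)
  rw [Real.sin_sub] at hs
  rw [Real.cot_eq_cos_div_sin, Real.cot_eq_cos_div_sin, div_lt_div_iff₀ hsy hsx]
  linarith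

theorem cot_pi_sub' (x : ℝ) : Real.cot (Real.pi - x) = -Real.cot x := by
  rw [Real.cot_eq_cos_div_sin, Real.cot_eq_cos_div_sin, Real.cos_pi_sub, Real.sin_pi_sub, neg_div]

/-- The Dirichlet form identity for a symmetric kernel with zero row sums. -/
theorem dirichlet_form {ι : Type*} [Fintype ι] (S : ι → ι → ℝ)
    (hsymm : ∀ i j, S i j = S j i) (hrow : ∀ i, ∑ j, S i j = 0) (x : ι → ℂ) :
    2 * ∑ i, ∑ j, (S i j : ℂ) * (starRingEnd ℂ (x i) * x j)
      = ((-∑ i, ∑ j, S i j * Complex.normSq (x i - x j) : ℝ) : ℂ) := by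
  have hrow' : ∀ i, ∑ j, (S i j : ℂ) = 0 := fun i => by exact_mod_cast hrow i
  have h1 : ∑ i, ∑ j, (S i j : ℂ) * (starRingEnd ℂ (x i) * x i) = 0 := by
    simp [← Finset.sum_mul, hrow']
  have h2 : ∑ i, ∑ j, (S i j : ℂ) * (starRingEnd ℂ (x j) * x j) = 0 := by
    rw [Finset.sum_comm, ← h1]
    exact Finset.sum_congr rfl fun i _ => Finset.sum_congr rfl fun j _ => by rw [hsymm]
  have h3 : ∑ i, ∑ j, (S i j : ℂ) * (starRingEnd ℂ (x j) * x i)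
      = ∑ i, ∑ j, (S i j : ℂ) * (starRingEnd ℂ (x i) * x j) := by
    rw [Finset.sum_comm]
    exact Finset.sum_congr rfl fun i _ => Finset.sum_congr rfl fun j _ => by rw [hsymm]
  have h4 : ∑ i, ∑ j, (S i j : ℂ) * (Complex.normSq (x i - x j) : ℂ)
      = ∑ i, ∑ j, (S i j : ℂ) * (starRingEnd ℂ (x i) * x i)
        + ∑ i, ∑ j, (S i j : ℂ) * (starRingEnd ℂ (x j) * x j)
        - ∑ i, ∑ j, (S i j : ℂ) * (starRingEnd ℂ (x i) * x j)
        - ∑ i, ∑ j, (S i j : ℂ) * (starRingEnd ℂ (x j) * x i) := by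
    simp only [← Finset.sum_add_distrib, ← Finset.sum_sub_distrib]
    refine Finset.sum_congr rfl fun i _ => Finset.sum_congr rfl fun j _ => ?_
    rw [Complex.normSq_eq_conj_mul_self, map_sub]
    ring
  push_cast
  rw [h4, h1, h2, h3]
  ring

/-- A generator matrix (nonnegative off the diagonal, zero row sums) that is reversible with
respect to a positive weight has real nonpositive spectrum. -/
theorem spectrum_of_reversible {ι : Type*} [Fintype ι] [DecidableEq ι] (A : Matrix ι ι ℝ)
    (w : ι → ℝ) (hw : ∀ i, 0 < w i) (hrev : ∀ i j, w i * A i j = w j * A j i)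
    (hoff : ∀ i j, i ≠ j → 0 ≤ A i j) (hrow : ∀ i, ∑ j, A i j = 0)
    (μ : ℂ) (hμ : μ ∈ spectrum ℂ (A.map (algebraMap ℝ ℂ))) : μ.im = 0 ∧ μ.re ≤ 0 := by
  rw [← Matrix.spectrum_toLin', ← Module.End.hasEigenvalue_iff_mem_spectrum] at hμ
  obtain ⟨x, hx⟩ := hμ.exists_hasEigenvector
  have hAx : ∀ i, ∑ j, (A i j : ℂ) * x j = μ * x i := fun i => by
    simpa [Matrix.mulVec, dotProduct] using congrFun hx.apply_eq_smul i
  have hD := dirichlet_form (fun i j => w i * A i j) hrev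
    (fun i => by rw [← Finset.mul_sum, hrow, mul_zero]) x
  have hL : ∑ i, ∑ j, ((w i * A i j : ℝ) : ℂ) * (starRingEnd ℂ (x i) * x j)
      = ((∑ i, w i * Complex.normSq (x i) : ℝ) : ℂ) * μ := by
    push_cast
    rw [Finset.sum_mul]
    refine Finset.sum_congr rfl fun i _ => ?_
    calc _ = (w i : ℂ) * starRingEnd ℂ (x i) * ∑ j, (A i j : ℂ) * x j := by
          rw [Finset.mul_sum]
          exact Finset.sum_congr rfl fun j _ => by ring
      _ = _ := by
          rw [hAx, Complex.normSq_eq_conj_mul_self]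
          ring
  have hN : 0 < ∑ i, w i * Complex.normSq (x i) := by
    obtain ⟨i, hi⟩ := Function.ne_iff.mp hx.2
    exact Finset.sum_pos' (fun i _ => mul_nonneg (hw i).le (Complex.normSq_nonneg _))
      ⟨i, Finset.mem_univ i, mul_pos (hw i) (Complex.normSq_pos.mpr hi)⟩
  have hE : 0 ≤ ∑ i, ∑ j, w i * A i j * Complex.normSq (x i - x j) := by
    refine Finset.sum_nonneg fun i _ => Finset.sum_nonneg fun j _ => ?_
    rcases eq_or_ne i j with rfl | hij
    · simp
    · exact mul_nonneg (mul_nonneg (hw i).le (hoff i j hij)) (Complex.normSq_nonneg _)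
  rw [hL] at hD
  generalize ∑ i, w i * Complex.normSq (x i) = N at hD hN
  generalize ∑ i, ∑ j, w i * A i j * Complex.normSq (x i - x j) = E at hD hE
  have him := congrArg Complex.im hD
  have hre := congrArg Complex.re hD
  simp at him hre
  refine ⟨him.resolve_left hN.ne', ?_⟩
  by_contra! hpos
  nlinarith [mul_pos hN hpos]

theorem tridiag_row_sum (n : ℕ) (c a b : ℕ → ℝ) (i : Fin n) :
    ∑ j, tridiag n c a b i j = a (i + 1) + (if (i : ℕ) + 1 < n then b (i + 1) else 0)
      + (if 0 < (i : ℕ) then c i else 0) := by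
  obtain ⟨i, hi⟩ := i
  have h1 : ∀ j : Fin n, tridiag n c a b ⟨i, hi⟩ j = (if i = (j : ℕ) then a (i + 1) else 0)
      + (if i + 1 = (j : ℕ) then b (i + 1) else 0)
      + (if 0 < i then (if i - 1 = (j : ℕ) then c i else 0) else 0) := by
    intro j
    simp only [tridiag, Matrix.of_apply]
    split_ifs <;> first | omega | simp
    congr 1
  simp only [h1]
  rw [Fin.sum_univ_eq_sum_range (fun j => (if i = j then a (i + 1) else 0)
      + (if i + 1 = j then b (i + 1) else 0)
      + (if 0 < i then (if i - 1 = j then c i else 0) else 0)) n]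
  have h2 : i - 1 < n := by omega
  rcases Nat.eq_zero_or_pos i with h0 | h0
  · subst h0
    simp [Finset.sum_add_distrib, hi]
  · simp [Finset.sum_add_distrib, hi, h0, h2]

/-- The weight symmetrizing a tridiagonal matrix with positive off-diagonal entries; `k` counts rows from
`0`, whereas `b` and `c` are indexed from `1`. -/
noncomputable def tridiagWeight (c b : ℕ → ℝ) (k : ℕ) : ℝ :=
  ∏ i ∈ Finset.range k, b (i + 1) / c (i + 1)

/-- A tridiagonal matrix with positive off-diagonal entries and zero row sums has real
nonpositive spectrum. -/
theorem tridiag_spectrum (n : ℕ) (c a b : ℕ → ℝ)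
    (hpos : ∀ ℓ, 1 ≤ ℓ → ℓ ≤ n - 1 → 0 < b ℓ ∧ 0 < c ℓ)
    (hrow : ∀ i, ∑ j, tridiag n c a b i j = 0)
    (μ : ℂ) (hμ : μ ∈ spectrum ℂ ((tridiag n c a b).map (algebraMap ℝ ℂ))) :
    μ.im = 0 ∧ μ.re ≤ 0 := by
  have hstep : ∀ k, k + 1 < n →
      tridiagWeight c b k * b (k + 1) = tridiagWeight c b (k + 1) * c (k + 1) := by
    intro k hk
    have := (hpos (k + 1) (by omega) (by omega)).2.ne'
    rw [tridiagWeight, tridiagWeight, Finset.prod_range_succ]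
    field_simp
  refine spectrum_of_reversible (tridiag n c a b) (fun i : Fin n => tridiagWeight c b i) ?_ ?_ ?_ hrow μ hμ
  · rintro ⟨i, hi⟩
    refine Finset.prod_pos fun k hk => ?_
    have hk' := Finset.mem_range.mp hk
    have := hpos (k + 1) (by omega) (by simp only at hk'; omega)
    exact div_pos this.1 this.2
  · rintro ⟨i, hi⟩ ⟨j, hj⟩
    simp only [tridiag, Matrix.of_apply]
    by_cases h1 : i = j
    · subst h1; rfl
    by_cases h2 : i + 1 = j
    · subst h2
      have h4 : ¬ i + 1 + 1 = i := by omega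
      simpa only [h1, h4, Ne.symm h1, if_true, if_false] using hstep i hj
    by_cases h3 : j + 1 = i
    · subst h3
      have h4 : ¬ j + 1 + 1 = j := by omega
      simpa only [h1, h4, Ne.symm h1, if_true, if_false] using (hstep j hi).symm
    simp [h1, h2, h3, Ne.symm h1]
  · rintro ⟨i, hi⟩ ⟨j, hj⟩ hij
    simp only [tridiag, Matrix.of_apply]
    split_ifs with h1 h2 h3
    · exact absurd (Fin.ext h1) hij
    · exact (hpos _ (by omega) (by omega)).1.le
    · exact (hpos _ (by omega) (by omega)).2.le
    · exact le_rfl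

/-- Let `σ ∈ (0,1/2)` and `h > 0` satisfy `h(n−1+2σ) = π` and `cot(σh) = 2/h`, and let
`A_φ` be the tridiagonal matrix with diagonal `−2/h²`, superdiagonal
`b_ℓ = 1/h² + cot((σ+ℓ−1)h)/(2h)` and subdiagonal `c_ℓ = b_{n−ℓ}`.  Then all
off-diagonal entries are positive and every complex eigenvalue of `A_φ` is real and
nonpositive. -/
theorem Aphi_positivity_and_spectrum
    (n : ℕ) (hn : 3 ≤ n) (σ h : ℝ)
    (hσ : σ ∈ Set.Ioo (0 : ℝ) (1 / 2)) (hh : 0 < h)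
    (hsys1 : h * ((n : ℝ) - 1 + 2 * σ) = Real.pi)
    (hsys2 : Real.cot (σ * h) = 2 / h) :
    let a : ℕ → ℝ := fun _ => -2 / h ^ 2
    let b : ℕ → ℝ := fun ℓ => 1 / h ^ 2 + Real.cot ((σ + (ℓ : ℝ) - 1) * h) / (2 * h)
    let c : ℕ → ℝ := fun ℓ => b (n - ℓ)
    (∀ ℓ, 1 ≤ ℓ → ℓ ≤ n - 1 → 0 < b ℓ ∧ 0 < c ℓ) ∧
    ∀ μ ∈ spectrum ℂ ((tridiag n c a b).map (algebraMap ℝ ℂ)),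
      μ.im = 0 ∧ μ.re ≤ 0 := by
  intro a b c
  have hσ0 : 0 < σ * h := mul_pos hσ.1 hh
  have hb : ∀ ℓ, 1 ≤ ℓ → ℓ ≤ n - 1 → 0 < b ℓ := by
    intro ℓ h1 h2
    have h1' : (1 : ℝ) ≤ ℓ := by exact_mod_cast h1
    have h2' : (ℓ : ℝ) + 1 ≤ n := by exact_mod_cast (by omega : ℓ + 1 ≤ n)
    -- `π - σ h` is the last grid point, where the cotangent equals `-2/h`.
    have hlt := cot_lt_cot_of_lt (x := (σ + (ℓ : ℝ) - 1) * h) (y := Real.pi - σ * h)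
      (mul_pos (by linarith [hσ.1]) hh) (by rw [← hsys1]; nlinarith) (by linarith)
    rw [cot_pi_sub', hsys2] at hlt
    have hdiv := div_lt_div_of_pos_right hlt (by positivity : 0 < 2 * h)
    have he : -(2 / h) / (2 * h) = -(1 / h ^ 2) := by field_simp
    rw [he] at hdiv
    show 0 < 1 / h ^ 2 + Real.cot ((σ + (ℓ : ℝ) - 1) * h) / (2 * h)
    linarith
  have hpos : ∀ ℓ, 1 ≤ ℓ → ℓ ≤ n - 1 → 0 < b ℓ ∧ 0 < c ℓ := fun ℓ h1 h2 =>
    ⟨hb ℓ h1 h2, hb (n - ℓ) (by omega) (by omega)⟩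
  refine ⟨hpos, fun μ hμ => tridiag_spectrum n c a b hpos ?_ μ hμ⟩
  have hb1 : b 1 = 2 / h ^ 2 := by
    show 1 / h ^ 2 + Real.cot ((σ + ((1 : ℕ) : ℝ) - 1) * h) / (2 * h) = _
    rw [Nat.cast_one, add_sub_cancel_right, hsys2]
    field_simp
    norm_num
  have hmid : ∀ i : ℕ, i ≤ n → b (i + 1) + c i = 2 / h ^ 2 := by
    intro i hi
    show (1 / h ^ 2 + Real.cot ((σ + ((i + 1 : ℕ) : ℝ) - 1) * h) / (2 * h))
      + (1 / h ^ 2 + Real.cot ((σ + ((n - i : ℕ) : ℝ) - 1) * h) / (2 * h)) = _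
    have : (σ + ((n - i : ℕ) : ℝ) - 1) * h
        = Real.pi - (σ + ((i + 1 : ℕ) : ℝ) - 1) * h := by
      rw [← hsys1, Nat.cast_sub hi]
      push_cast
      ring
    rw [this, cot_pi_sub']
    ring
  rintro ⟨i, hi⟩
  rw [tridiag_row_sum]
  have ha : a (i + 1) = -(2 / h ^ 2) := neg_div _ _
  simp only [ha]
  rcases Nat.eq_zero_or_pos i with h0 | h0
  · subst h0
    simp [hb1, (by omega : 1 < n)]
  · by_cases h1 : i + 1 < n
    · simp only [h1, h0, if_true]
      linarith [hmid i hi.le]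
    · have hc : c i = b 1 := by
        show b (n - i) = b 1
        rw [(by omega : n - i = 1)]
      simp [h1, h0, hc, hb1]
end

section
/- Let λ < 0 be a fixed real number and for each integer n ≥ 2 set P_{n−1}(λ) = ( ∏_{i=1}^{n−1} (i − λ) ) / (n−1)!. Then there exists a constant C > 0, depending only on λ, such that for all n ≥ 2 one has ( (2n−1−λ)/(1−λ) )^{1+λ} · P_{n−1}(λ) ≤ C·n; equivalently, the quantity √( ((2n−1−λ)/(1−λ))^{1+λ} P_{n−1}(λ) ) grows at most like √n as n → ∞. -/
/-!
Write `a = -λ > 0`. Each factor of `P_m(λ) = ∏_{i ≤ m} (1 + a / i)` is at most `exp (a / i)`, so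
`P_m(λ) ≤ exp (a * H_m)`, and `H_m ≤ 1 + log m` gives `P_{n-1}(λ) ≤ exp a * n ^ a`.
The base `(2n - 1 + a) / (1 + a)` is `r * n` with `1 / (1 + a) ≤ r ≤ 2`, so its power `1 - a` is
at most a constant times `n ^ (1 - a)`, and `n ^ (1 - a) * n ^ a = n`.
-/

/-- The product quotient is bounded by the exponential of a harmonic number. -/
lemma prod_div_factorial_le_exp_harmonic (lam : ℝ) (hlam : lam < 0) (m : ℕ) :
    (∏ i ∈ Finset.Icc 1 m, ((i : ℝ) - lam)) / m.factorial ≤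
      Real.exp (-lam * (harmonic m : ℝ)) := by
  induction m with
  | zero => simp
  | succ k ih =>
    have hk : (0 : ℝ) < (k : ℝ) + 1 := by positivity
    have hfac : (0 : ℝ) < k.factorial := by positivity
    have hsplit : (∏ i ∈ Finset.Icc 1 (k + 1), ((i : ℝ) - lam)) / (k + 1).factorial =
        (∏ i ∈ Finset.Icc 1 k, ((i : ℝ) - lam)) / k.factorial * (-lam * ((k : ℝ) + 1)⁻¹ + 1) := by
      rw [Finset.prod_Icc_succ_top (by omega), Nat.factorial_succ]
      push_cast
      field_simp
      ring
    rw [hsplit, harmonic_succ]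
    push_cast
    rw [mul_add (-lam), Real.exp_add]
    have hpos : 0 ≤ -lam * ((k : ℝ) + 1)⁻¹ + 1 := by
      have : 0 ≤ -lam * ((k : ℝ) + 1)⁻¹ := mul_nonneg (by linarith) (by positivity)
      linarith
    exact mul_le_mul ih (Real.add_one_le_exp _) hpos (Real.exp_pos _).le

/-- A real power, of exponent of either sign, is bounded on an interval `[l, u]` with `0 < l`
by the sum of its values at the endpoints. -/
lemma rpow_le_add_endpoints {l u r : ℝ} (hl : 0 < l) (hlr : l ≤ r) (hru : r ≤ u) (p : ℝ) :
    r ^ p ≤ u ^ p + l ^ p := by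
  have hu : 0 < u := by linarith
  rcases le_total 0 p with hp | hp
  · have := Real.rpow_le_rpow (by linarith) hru hp
    have := Real.rpow_pos_of_pos hl p
    linarith
  · have := Real.rpow_le_rpow_of_nonpos hl hlr hp
    have := Real.rpow_pos_of_pos hu p
    linarith

/-- For fixed `λ < 0`, the quantity `((2n−1−λ)/(1−λ))^{1+λ} · P_{n−1}(λ)`, where
`P_{n−1}(λ) = (∏_{i=1}^{n−1} (i−λ))/(n−1)!`, is bounded by `C·n` for a constant `C > 0`
depending only on `λ`; i.e. the largest diagonal entry
`√(((2n−1−λ)/(1−λ))^{1+λ} P_{n−1}(λ))` of `Ξ⁻¹` grows at most like `√n`. -/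
theorem xi_inv_growth (lam : ℝ) (hlam : lam < 0) :
    ∃ C : ℝ, 0 < C ∧ ∀ n : ℕ, 2 ≤ n →
      ((2 * (n : ℝ) - 1 - lam) / (1 - lam)) ^ (1 + lam) *
          ((∏ i ∈ Finset.Icc 1 (n - 1), ((i : ℝ) - lam)) / (n - 1).factorial) ≤
        C * n := by
  have hd : 0 < 1 - lam := by linarith
  refine ⟨((2 : ℝ) ^ (1 + lam) + (1 / (1 - lam)) ^ (1 + lam)) * Real.exp (-lam), by positivity, ?_⟩
  intro n hn
  have hn2 : (2 : ℝ) ≤ n := by exact_mod_cast hn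
  have hn0 : (0 : ℝ) < n := by linarith
  have hprod : (∏ i ∈ Finset.Icc 1 (n - 1), ((i : ℝ) - lam)) / (n - 1).factorial ≤
      Real.exp (-lam) * (n : ℝ) ^ (-lam) := by
    refine (prod_div_factorial_le_exp_harmonic lam hlam (n - 1)).trans ?_
    rw [Real.rpow_def_of_pos hn0, ← Real.exp_add]
    apply Real.exp_le_exp.mpr
    have h1 := harmonic_le_one_add_log (n - 1)
    have h2 : Real.log ((n - 1 : ℕ) : ℝ) ≤ Real.log n := by
      apply Real.log_le_log
      · exact_mod_cast (by omega : 0 < n - 1)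
      · exact_mod_cast Nat.sub_le n 1
    nlinarith
  have hbase : ((2 * (n : ℝ) - 1 - lam) / (1 - lam)) ^ (1 + lam) ≤
      ((2 : ℝ) ^ (1 + lam) + (1 / (1 - lam)) ^ (1 + lam)) * (n : ℝ) ^ (1 + lam) := by
    have hr1 : 1 / (1 - lam) ≤ (2 * (n : ℝ) - 1 - lam) / (1 - lam) / n := by
      rw [div_div, div_le_div_iff₀ hd (by positivity)]
      nlinarith
    have hr2 : (2 * (n : ℝ) - 1 - lam) / (1 - lam) / n ≤ 2 := by
      rw [div_div, div_le_iff₀ (by positivity)]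
      nlinarith
    have hr0 : 0 < 1 / (1 - lam) := by positivity
    have heq : (2 * (n : ℝ) - 1 - lam) / (1 - lam) =
        (2 * (n : ℝ) - 1 - lam) / (1 - lam) / n * n := by
      field_simp
    rw [heq, Real.mul_rpow (hr0.le.trans hr1) hn0.le]
    exact mul_le_mul_of_nonneg_right (rpow_le_add_endpoints hr0 hr1 hr2 _) (by positivity)
  have hnn : (n : ℝ) ^ (1 + lam) * (n : ℝ) ^ (-lam) = n := by
    rw [← Real.rpow_add hn0]
    simp
  calc _ ≤ (((2 : ℝ) ^ (1 + lam) + (1 / (1 - lam)) ^ (1 + lam)) * (n : ℝ) ^ (1 + lam)) *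
        (Real.exp (-lam) * (n : ℝ) ^ (-lam)) := by
        refine mul_le_mul hbase hprod ?_ (by positivity)
        exact div_nonneg (Finset.prod_nonneg fun i _ => by
          have : (0 : ℝ) ≤ i := Nat.cast_nonneg i
          linarith) (by positivity)
    _ = ((2 : ℝ) ^ (1 + lam) + (1 / (1 - lam)) ^ (1 + lam)) * Real.exp (-lam) *
        ((n : ℝ) ^ (1 + lam) * (n : ℝ) ^ (-lam)) := by ring
    _ = _ := by rw [hnn]
end
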